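/- Let K be a field, s ∈ ℤ^m, let P ∈ K[x]^{m×m} be in −s-weak Popov form, let δ ∈ ℕ^m be the −s-pivot degree of P, and assume s ≥ δ entrywise. Set d = (s − δ, δ) ∈ ℤ^{2m} (concatenation) and F = [P; −I_m] ∈ K[x]^{2m×m}. Let [Ũ R̃] ∈ K[x]^{m×2m} be any basis of the left kernel of F which is in −d-reduced form, where Ũ and R̃ are both m×m. Then R̃ is a −δ-reduced form of P, the matrix lm_{−δ}(R̃) ∈ K^{m×m} is invertible, and lm_{−δ}(R̃)^{−1}·R̃ is the −s-Popov form of P. -/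

import Mathlib

open Polynomial Matrix

/-- The degree of a polynomial, viewed in `ℤ ∪ {-∞}`. -/
noncomputable def degZ {K : Type*} [Field K] (p : K[X]) : WithBot ℤ :=
  p.degree.map fun a : ℕ => (a : ℤ)

/-- The `s`-row degree of a (row) vector of polynomials. -/
noncomputable def rdegRow {K : Type*} [Field K] {ν : Type*} [Fintype ν]
    (s : ν → ℤ) (v : ν → K[X]) : WithBot ℤ :=
  Finset.univ.sup fun j => degZ (v j) + (s j : WithBot ℤ)

/-- The `s`-row degree of a polynomial matrix. -/
noncomputable def rdeg {K : Type*} [Field K] {ι ν : Type*} [Fintype ν]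
    (s : ν → ℤ) (P : Matrix ι ν K[X]) : ι → WithBot ℤ :=
  fun i => rdegRow s (P i)

/-- The `t`-column degree of a polynomial matrix. -/
noncomputable def cdeg {K : Type*} [Field K] {ι ν : Type*} [Fintype ι]
    (t : ι → ℤ) (P : Matrix ι ν K[X]) : ν → WithBot ℤ :=
  fun j => Finset.univ.sup fun i => degZ (P i j) + (t i : WithBot ℤ)

/-- Coefficient of integer degree `d` of a polynomial (0 if `d < 0`). -/
noncomputable def coeffZ {K : Type*} [Field K] (p : K[X]) (d : ℤ) : K :=
  if 0 ≤ d then p.coeff d.toNat else 0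

/-- The `s`-leading matrix of a polynomial matrix. -/
noncomputable def lm {K : Type*} [Field K] {ι ν : Type*} [Fintype ν]
    (s : ν → ℤ) (P : Matrix ι ν K[X]) : Matrix ι ν K :=
  Matrix.of fun i j =>
    (rdeg s P i).recBotCoe 0 fun t => coeffZ (P i j) (t - s j)

/-- `P` is in `s`-reduced form: its `s`-leading matrix has full row rank,
i.e. its rows are linearly independent over `K`. -/
def IsReducedForm {K : Type*} [Field K] {ι ν : Type*} [Fintype ν]
    (s : ν → ℤ) (P : Matrix ι ν K[X]) : Prop :=
  LinearIndependent K fun i => lm s P i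

open Classical in
/-- The `s`-pivot index of a row vector: the largest column index where the
`s`-row degree is attained (with a nonzero entry); `⊥` for the zero row. -/
noncomputable def piv {K : Type*} [Field K] {ν : Type*} [Fintype ν] [LinearOrder ν]
    (s : ν → ℤ) (v : ν → K[X]) : WithBot ν :=
  (Finset.univ.filter fun j => v j ≠ 0 ∧ degZ (v j) + (s j : WithBot ℤ) = rdegRow s v).max

/-- The `s`-pivot degree of a row vector (junk value `0` for the zero row). -/
noncomputable def pivDeg {K : Type*} [Field K] {ν : Type*} [Fintype ν] [LinearOrder ν]
    (s : ν → ℤ) (v : ν → K[X]) : ℕ :=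
  ((piv s v).map fun j => (v j).natDegree).unbotD 0

/-- `P` is in `s`-weak Popov form: no zero row and strictly increasing `s`-pivot indices. -/
def IsWeakPopov {K : Type*} [Field K] {ι ν : Type*} [Fintype ν] [LinearOrder ν] [Preorder ι]
    (s : ν → ℤ) (P : Matrix ι ν K[X]) : Prop :=
  (∀ i, piv s (P i) ≠ ⊥) ∧ StrictMono fun i => piv s (P i)

/-- `P` is in `s`-unordered weak Popov form: no zero row and pairwise distinct
`s`-pivot indices. -/
def IsUWeakPopov {K : Type*} [Field K] {ι ν : Type*} [Fintype ν] [LinearOrder ν]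
    (s : ν → ℤ) (P : Matrix ι ν K[X]) : Prop :=
  (∀ i, piv s (P i) ≠ ⊥) ∧ Function.Injective fun i => piv s (P i)

/-- `P` is in `s`-Popov form: `s`-weak Popov, monic pivots, and each pivot entry
has degree strictly larger than the other entries of its column. -/
def IsPopov {K : Type*} [Field K] {ι ν : Type*} [Fintype ν] [LinearOrder ν] [Preorder ι]
    (s : ν → ℤ) (P : Matrix ι ν K[X]) : Prop :=
  IsWeakPopov s P ∧
    ∀ i (j : ν), piv s (P i) = (j : WithBot ν) →
      (P i j).Monic ∧ ∀ i', i' ≠ i → (P i' j).degree < (P i j).degree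

/-- The row space of a polynomial matrix. -/
noncomputable def rowSpace {K : Type*} [Field K] {ι ν : Type*} (P : Matrix ι ν K[X]) :
    Submodule K[X] (ν → K[X]) :=
  Submodule.span K[X] (Set.range fun i => P i)

/-- The rows of `B` form a basis of the module `M`. -/
def IsBasisOf {K : Type*} [Field K] {ι ν : Type*} (B : Matrix ι ν K[X])
    (M : Submodule K[X] (ν → K[X])) : Prop :=
  LinearIndependent K[X] (fun i => B i) ∧
    Submodule.span K[X] (Set.range fun i => B i) = M

/-- The left kernel of a polynomial matrix. -/
noncomputable def leftKernel {K : Type*} [Field K] {ι ν : Type*} [Fintype ι]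
    (F : Matrix ι ν K[X]) : Submodule K[X] (ι → K[X]) :=
  LinearMap.ker F.vecMulLinear

/-! If `P` is square and in `-s`-weak Popov form with pivot degrees `δ`, the leading terms of a
nonzero row `u * P` cannot cancel: its pivot lies in the column of some pivot of `P`, with at least
the same degree. Hence no nonzero multiple of `P` has all column degrees below `δ`, and counting
dimensions, every row has a remainder modulo `P` of that kind. Dividing `diag (X ^ δ)` gives `U`
such that `U * P` has identity column-leading matrix, and `U * P` is then the Popov form of `P`.

The kernel elements are the rows `[u, u * P]`. Since `δ ≤ s`, those of `[U, U * P]` have nonpositive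
`-d`-row degree, so by the predictable degree property the same holds for every `-d`-reduced kernel
basis `[Ũ, Ũ * P]`; in particular `R̃ = Ũ * P` has column degrees at most `δ`. With `L` the matrix
of coefficients of degrees `δ` of the columns of `R̃`, the difference `R̃ - L * (U * P)` is a
multiple of `P` with column degrees below `δ`, hence zero. Since `Ũ = L * U` is unimodular, `L` is
invertible, so it is the `-δ`-leading matrix of `R̃`.
-/

section Degree

variable {K : Type*} [Field K] {p q : K[X]} {a b : ℤ}

theorem degZ_of_ne_zero (hp : p ≠ 0) : degZ p = ((p.natDegree : ℤ) : WithBot ℤ) := by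
  rw [degZ, degree_eq_natDegree hp]
  rfl

theorem coeffZ_natCast (p : K[X]) (n : ℕ) : coeffZ p n = p.coeff n := by
  simp [coeffZ]

theorem coeffZ_of_neg (p : K[X]) (ha : a < 0) : coeffZ p a = 0 :=
  if_neg ha.not_ge

theorem nonneg_of_coeffZ_ne_zero (h : coeffZ p a ≠ 0) : 0 ≤ a :=
  not_lt.mp fun ha => h (coeffZ_of_neg p ha)

theorem coeffZ_zero (a : ℤ) : coeffZ (0 : K[X]) a = 0 := by
  simp [coeffZ]

theorem coeffZ_sum {ι : Type*} (I : Finset ι) (f : ι → K[X]) (a : ℤ) :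
    coeffZ (∑ i ∈ I, f i) a = ∑ i ∈ I, coeffZ (f i) a := by
  unfold coeffZ
  split_ifs <;> simp

theorem degZ_le_natCast_iff {n : ℕ} : degZ p ≤ ((n : ℤ) : WithBot ℤ) ↔ p.degree ≤ n := by
  by_cases hp : p = 0
  · simp [hp, degZ]
  · rw [degZ_of_ne_zero hp, degree_eq_natDegree hp, WithBot.coe_le_coe, Nat.cast_le, Nat.cast_le]

theorem degree_sub_C_mul_X_pow_lt {n : ℕ} (hp : p.degree ≤ n) :
    (p - C (p.coeff n) * X ^ n : K[X]).degree < n := by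
  refine (degree_lt_iff_coeff_zero _ _).mpr fun k hk => ?_
  rw [coeff_sub, coeff_C_mul_X_pow]
  rcases hk.eq_or_lt with rfl | hlt
  · simp
  · rw [if_neg hlt.ne', sub_zero, coeff_eq_zero_of_degree_lt (hp.trans_lt (Nat.cast_lt.mpr hlt))]

theorem degZ_le_iff : degZ p ≤ (a : WithBot ℤ) ↔ ∀ b, a < b → coeffZ p b = 0 := by
  by_cases hp : p = 0
  · simp [hp, degZ, coeffZ_zero]
  rw [degZ_of_ne_zero hp, WithBot.coe_le_coe]
  refine ⟨fun h b hb => ?_, fun h => ?_⟩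
  · lift b to ℕ using by lia
    rw [coeffZ_natCast, coeff_eq_zero_of_natDegree_lt (by lia)]
  · by_contra! hlt
    have hlead := h _ hlt
    rw [coeffZ_natCast, coeff_natDegree, leadingCoeff_eq_zero] at hlead
    exact hp hlead

theorem eq_zero_of_degZ_le_of_neg (h : degZ p ≤ (a : WithBot ℤ)) (ha : a < 0) : p = 0 := by
  ext n
  rw [← coeffZ_natCast, degZ_le_iff.mp h n (by lia), coeff_zero]

theorem degZ_add_eq_iff {s c : ℤ} (h : degZ p ≤ ((c - s : ℤ) : WithBot ℤ)) :
    p ≠ 0 ∧ degZ p + (s : WithBot ℤ) = (c : WithBot ℤ) ↔ coeffZ p (c - s) ≠ 0 := by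
  rcases eq_or_ne p 0 with rfl | hp
  · simp [coeffZ_zero]
  rw [degZ_of_ne_zero hp] at h ⊢
  rw [WithBot.coe_le_coe] at h
  rw [← WithBot.coe_add, WithBot.coe_inj, and_iff_right hp]
  refine ⟨fun heq => ?_, fun hne => ?_⟩
  · rw [← heq, add_sub_cancel_right, coeffZ_natCast, coeff_natDegree]
    exact leadingCoeff_ne_zero.mpr hp
  · by_contra hlt
    exact hne (degZ_le_iff.mp (degZ_of_ne_zero hp).le _ (by lia))

theorem coeffZ_mul (hp : degZ p ≤ (a : WithBot ℤ)) (hq : degZ q ≤ (b : WithBot ℤ)) :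
    coeffZ (p * q) (a + b) = coeffZ p a * coeffZ q b := by
  rcases lt_or_ge a 0 with ha | ha
  · simp [eq_zero_of_degZ_le_of_neg hp ha, coeffZ_zero]
  rcases lt_or_ge b 0 with hb | hb
  · simp [eq_zero_of_degZ_le_of_neg hq hb, coeffZ_zero]
  lift a to ℕ using ha
  lift b to ℕ using hb
  rw [degZ_le_natCast_iff, ← natDegree_le_iff_degree_le] at hp hq
  rw [← Nat.cast_add, coeffZ_natCast, coeffZ_natCast, coeffZ_natCast,
    coeff_mul_add_eq_of_natDegree_le hp hq]

end Degree

section ShiftedCoeff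

variable {K : Type*} [Field K] {ι ν : Type*}

/-- The coefficient vector, in shifted degree `c`, of a row `v`: column `j` contributes its
coefficient of degree `c - s j`. For `c` the `s`-row degree of `v` this is the leading vector
of `v`, and a row of the `s`-leading matrix. -/
noncomputable def shiftedCoeff (s : ν → ℤ) (c : ℤ) (v : ν → K[X]) : ν → K :=
  fun j => coeffZ (v j) (c - s j)

variable [Fintype ν] {s : ν → ℤ} {c : ℤ} {v : ν → K[X]}

theorem rdegRow_le_iff_degZ :
    rdegRow s v ≤ (c : WithBot ℤ) ↔ ∀ j, degZ (v j) ≤ ((c - s j : ℤ) : WithBot ℤ) := by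
  simp only [rdegRow, Finset.sup_le_iff, Finset.mem_univ, true_imp_iff]
  refine forall_congr' fun j => ?_
  cases degZ (v j) with
  | bot => simp
  | coe a => rw [← WithBot.coe_add, WithBot.coe_le_coe, WithBot.coe_le_coe, le_sub_iff_add_le]

theorem rdegRow_le_iff :
    rdegRow s v ≤ (c : WithBot ℤ) ↔ ∀ c', c < c' → shiftedCoeff s c' v = 0 := by
  simp only [rdegRow_le_iff_degZ, degZ_le_iff, funext_iff, shiftedCoeff, Pi.zero_apply]
  refine ⟨fun h c' hc j => h j _ (by lia), fun h j b hb => ?_⟩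
  simpa using h (b + s j) (by lia) j

theorem rdegRow_lt_iff :
    rdegRow s v < (c : WithBot ℤ) ↔ ∀ c', c ≤ c' → shiftedCoeff s c' v = 0 := by
  have hpred : rdegRow s v < (c : WithBot ℤ) ↔ rdegRow s v ≤ ((c - 1 : ℤ) : WithBot ℤ) := by
    cases rdegRow s v with
    | bot => simp
    | coe a => rw [WithBot.coe_lt_coe, WithBot.coe_le_coe, Int.le_sub_one_iff]
  simp only [hpred, rdegRow_le_iff, Int.sub_one_lt_iff]

theorem rdegRow_eq_iff :
    rdegRow s v = (c : WithBot ℤ) ↔ rdegRow s v ≤ (c : WithBot ℤ) ∧ shiftedCoeff s c v ≠ 0 := by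
  refine ⟨fun h => ⟨h.le, fun h0 => h.not_lt (rdegRow_lt_iff.mpr fun c' hc' => ?_)⟩,
    fun ⟨hle, hne⟩ => hle.eq_of_not_lt fun hlt => hne (rdegRow_lt_iff.mp hlt c le_rfl)⟩
  rcases hc'.eq_or_lt with rfl | hlt
  · exact h0
  · exact rdegRow_le_iff.mp h.le c' hlt

theorem rdegRow_lt_iff_degree {n : ν → ℕ} (hn : ∀ j, (n j : ℤ) + s j = c) :
    rdegRow s v < (c : WithBot ℤ) ↔ ∀ j, (v j).degree < n j := by
  simp only [rdegRow_lt_iff, degree_lt_iff_coeff_zero, funext_iff, shiftedCoeff, Pi.zero_apply]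
  refine ⟨fun h j a ha => ?_, fun h c' hc' j => ?_⟩
  · have hj := h (a + s j) (by have := hn j; lia) j
    rwa [add_sub_cancel_right, coeffZ_natCast] at hj
  · obtain ⟨a, ha⟩ := Int.eq_ofNat_of_zero_le (show 0 ≤ c' - s j by have := hn j; lia)
    rw [ha, coeffZ_natCast, h j a (by have := hn j; lia)]

theorem eventually_rdegRow_lt (s : ν → ℤ) (v : ν → K[X]) :
    ∀ᶠ c : ℤ in Filter.atTop, rdegRow s v < (c : WithBot ℤ) := by
  cases rdegRow s v with
  | bot => exact .of_forall WithBot.bot_lt_coe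
  | coe a => simpa only [WithBot.coe_lt_coe] using Filter.eventually_gt_atTop a

theorem rdegRow_eq_bot_iff : rdegRow s v = ⊥ ↔ v = 0 := by
  simp [rdegRow, Finset.sup_eq_bot_iff, degZ, funext_iff]

theorem exists_rdegRow_eq (s : ν → ℤ) (hv : v ≠ 0) : ∃ c : ℤ, rdegRow s v = (c : WithBot ℤ) :=
  (WithBot.ne_bot_iff_exists.mp (rdegRow_eq_bot_iff.not.mpr hv)).imp fun _ => Eq.symm

theorem lm_row_eq {P : Matrix ι ν K[X]} {i : ι} (h : rdegRow s (P i) = (c : WithBot ℤ)) :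
    lm s P i = shiftedCoeff s c (P i) := by
  ext j
  simp [lm, rdeg, h, shiftedCoeff]

theorem shiftedCoeff_vecMul [Fintype ι] {t : ι → ℤ} {B : Matrix ι ν K[X]}
    (ht : ∀ i, rdegRow s (B i) = (t i : WithBot ℤ)) {w : ι → K[X]}
    (hw : rdegRow t w ≤ (c : WithBot ℤ)) :
    shiftedCoeff s c (w ᵥ* B) = shiftedCoeff t c w ᵥ* lm s B := by
  ext j
  simp only [shiftedCoeff, Matrix.vecMul, dotProduct, coeffZ_sum]
  refine Finset.sum_congr rfl fun i _ => ?_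
  rw [lm_row_eq (ht i), shiftedCoeff, ← coeffZ_mul (rdegRow_le_iff_degZ.mp hw i)
    (rdegRow_le_iff_degZ.mp (ht i).le j), sub_add_sub_cancel]

end ShiftedCoeff

section Reduced

variable {K : Type*} [Field K] {ι ν : Type*} [Fintype ν] {s : ν → ℤ} {B : Matrix ι ν K[X]}

theorem IsReducedForm.exists_rdegRow_eq (hB : IsReducedForm s B) :
    ∃ t : ι → ℤ, ∀ i, rdegRow s (B i) = (t i : WithBot ℤ) := by
  refine Classical.skolem.mp fun i => _root_.exists_rdegRow_eq s fun h0 => hB.ne_zero i ?_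
  ext j
  simp [lm, rdeg, rdegRow_eq_bot_iff.mpr h0]

variable [Fintype ι]

/-- The predictable degree property. -/
theorem IsReducedForm.rdegRow_vecMul (hB : IsReducedForm s B) {t : ι → ℤ}
    (ht : ∀ i, rdegRow s (B i) = (t i : WithBot ℤ)) (w : ι → K[X]) :
    rdegRow s (w ᵥ* B) = rdegRow t w := by
  rcases eq_or_ne w 0 with rfl | hw
  · rw [Matrix.zero_vecMul, rdegRow_eq_bot_iff.mpr rfl, rdegRow_eq_bot_iff.mpr rfl]
  obtain ⟨c, hc⟩ := _root_.exists_rdegRow_eq t hw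
  obtain ⟨hle, hne⟩ := rdegRow_eq_iff.mp hc
  rw [hc, rdegRow_eq_iff]
  refine ⟨rdegRow_le_iff.mpr fun c' hc' => ?_, ?_⟩
  · rw [shiftedCoeff_vecMul ht (hle.trans (WithBot.coe_le_coe.mpr hc'.le)),
      rdegRow_le_iff.mp hle c' hc', Matrix.zero_vecMul]
  · rw [shiftedCoeff_vecMul ht hle]
    intro h0
    exact hne (Matrix.vecMul_injective_iff.mpr hB (h0.trans (Matrix.zero_vecMul _).symm))

theorem IsReducedForm.eq_zero_of_vecMul_eq_zero (hB : IsReducedForm s B) {w : ι → K[X]}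
    (hw : w ᵥ* B = 0) : w = 0 := by
  obtain ⟨t, ht⟩ := hB.exists_rdegRow_eq
  rw [← rdegRow_eq_bot_iff (s := t), ← hB.rdegRow_vecMul ht, hw, rdegRow_eq_bot_iff]

/-- Every row of `B` occurs in some row of `W * B`, since `W` has no zero column. -/
theorem IsReducedForm.rdegRow_le_of_mul [DecidableEq ι] (hB : IsReducedForm s B) {c : ℤ}
    {W : Matrix ι ι K[X]} (hW : W.det ≠ 0)
    (h : ∀ i, rdegRow s ((W * B) i) ≤ (c : WithBot ℤ)) (k : ι) :
    rdegRow s (B k) ≤ (c : WithBot ℤ) := by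
  obtain ⟨t, ht⟩ := hB.exists_rdegRow_eq
  obtain ⟨i, hi⟩ : ∃ i, W i k ≠ 0 := by
    by_contra! hzero
    exact hW (Matrix.det_eq_zero_of_column_eq_zero k hzero)
  have hrow : rdegRow t (W i) ≤ (c : WithBot ℤ) := (hB.rdegRow_vecMul ht (W i)).symm.trans_le (h i)
  have hdeg := rdegRow_le_iff_degZ.mp hrow k
  rw [degZ_of_ne_zero hi, WithBot.coe_le_coe] at hdeg
  rw [ht k, WithBot.coe_le_coe]
  lia

end Reduced

section Echelon

variable {K : Type*} [Field K] {ι ν : Type*} [Fintype ι] [LinearOrder ν]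

theorem exists_last_ne_zero_vecMul {L : Matrix ι ν K} {f : ι → ν} (hf : Function.Injective f)
    (hne : ∀ i, L i (f i) ≠ 0) (hzero : ∀ i j, f i < j → L i j = 0) {u : ι → K} (hu : u ≠ 0) :
    ∃ i, u i ≠ 0 ∧ (u ᵥ* L) (f i) ≠ 0 ∧ ∀ j, f i < j → (u ᵥ* L) j = 0 := by
  classical
  obtain ⟨k, hk⟩ := Function.ne_iff.mp hu
  obtain ⟨i, hi, hmax⟩ := Finset.exists_max_image {i | u i ≠ 0} f ⟨k, by simpa using hk⟩
  simp only [Finset.mem_filter_univ] at hi hmax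
  have hterm : ∀ i' j, f i ≤ j → f i' ≠ j ∨ f i < j → u i' * L i' j = 0 := by
    intro i' j hij hor
    by_cases hi' : u i' = 0
    · rw [hi', zero_mul]
    · rw [hzero i' j (by grind), mul_zero]
  refine ⟨i, hi, ?_, fun j hj => Finset.sum_eq_zero fun i' _ => hterm i' j hj.le (.inr hj)⟩
  rw [Matrix.vecMul, dotProduct, Finset.sum_eq_single i
    (fun i' _ hi' => hterm i' (f i) le_rfl (.inl (hf.ne hi'))) (by simp)]
  exact mul_ne_zero hi (hne i)

end Echelon

section Pivot

variable {K : Type*} [Field K] {ι ν : Type*} [Fintype ν] [LinearOrder ν] {s : ν → ℤ}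
  {v : ν → K[X]} {j : ν}

theorem piv_eq_coe_iff {c : ℤ} (hc : rdegRow s v = (c : WithBot ℤ)) :
    piv s v = (j : WithBot ν) ↔
      shiftedCoeff s c v j ≠ 0 ∧ ∀ k, j < k → shiftedCoeff s c v k = 0 := by
  classical
  have hmem : ∀ k, (v k ≠ 0 ∧ degZ (v k) + (s k : WithBot ℤ) = rdegRow s v) ↔
      shiftedCoeff s c v k ≠ 0 := fun k => by
    rw [hc, shiftedCoeff, ← degZ_add_eq_iff (rdegRow_le_iff_degZ.mp hc.le k)]
  simp only [piv, hmem]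
  constructor
  · intro h
    refine ⟨(Finset.mem_filter.mp (Finset.mem_of_max h)).2, fun k hk => ?_⟩
    by_contra hne
    exact hk.not_ge (Finset.le_max_of_eq (Finset.mem_filter.mpr ⟨Finset.mem_univ k, hne⟩) h)
  · rintro ⟨hne, hzero⟩
    refine le_antisymm (Finset.max_le fun k hk => ?_) (Finset.le_max (by simpa using hne))
    rw [WithBot.coe_le_coe]
    by_contra! hlt
    exact (Finset.mem_filter.mp hk).2 (hzero k hlt)

theorem rdegRow_eq_of_piv_eq_coe (h : piv s v = (j : WithBot ν)) :
    rdegRow s v = ((pivDeg s v + s j : ℤ) : WithBot ℤ) := by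
  classical
  obtain ⟨hne, hdeg⟩ := (Finset.mem_filter.mp (Finset.mem_of_max h)).2
  rw [← hdeg, degZ_of_ne_zero hne, pivDeg, h, ← WithBot.coe_add]
  rfl

theorem degree_eq_pivDeg (h : piv s v = (j : WithBot ν)) : (v j).degree = pivDeg s v := by
  classical
  rw [degree_eq_natDegree (Finset.mem_filter.mp (Finset.mem_of_max h)).2.1, pivDeg, h]
  rfl

variable {P : Matrix ι ν K[X]}

theorem IsUWeakPopov.exists_lm_pivots (hP : IsUWeakPopov s P) :
    ∃ f : ι → ν, Function.Injective f ∧ (∀ i, piv s (P i) = f i) ∧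
      (∀ i, lm s P i (f i) ≠ 0) ∧ ∀ i j, f i < j → lm s P i j = 0 := by
  choose f hf using fun i => WithBot.ne_bot_iff_exists.mp (hP.1 i)
  have hlm : ∀ i, lm s P i (f i) ≠ 0 ∧ ∀ j, f i < j → lm s P i j = 0 := fun i => by
    have hdeg := rdegRow_eq_of_piv_eq_coe (hf i).symm
    rw [lm_row_eq hdeg, ← piv_eq_coe_iff hdeg, hf]
  refine ⟨f, fun i i' h => hP.2 ?_, fun i => (hf i).symm, fun i => (hlm i).1, fun i => (hlm i).2⟩
  simp only [← hf, h]

theorem IsUWeakPopov.isReducedForm [Finite ι] (hP : IsUWeakPopov s P) : IsReducedForm s P := by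
  obtain ⟨f, hf, -, hne, hzero⟩ := hP.exists_lm_pivots
  cases nonempty_fintype ι
  refine Fintype.linearIndependent_iff.mpr fun u hu => congrFun ?_
  by_contra hu0
  obtain ⟨i, -, hi, -⟩ := exists_last_ne_zero_vecMul hf hne hzero hu0
  rw [Matrix.vecMul_eq_sum, hu] at hi
  exact hi rfl

/-- The rows of a weak Popov matrix behave like a Gröbner basis of its row space. -/
theorem IsUWeakPopov.exists_piv_vecMul [Fintype ι] (hP : IsUWeakPopov s P) {q : ι → K[X]}
    (hq : q ≠ 0) :
    ∃ i, piv s (q ᵥ* P) = piv s (P i) ∧ pivDeg s (P i) ≤ pivDeg s (q ᵥ* P) := by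
  obtain ⟨f, hf, hpiv, hne, hzero⟩ := hP.exists_lm_pivots
  have ht := fun i => rdegRow_eq_of_piv_eq_coe (hpiv i)
  obtain ⟨c, hc⟩ := exists_rdegRow_eq (fun i => pivDeg s (P i) + s (f i)) hq
  have hcP := (hP.isReducedForm.rdegRow_vecMul ht q).trans hc
  obtain ⟨i, hi, hlast⟩ := exists_last_ne_zero_vecMul hf hne hzero (rdegRow_eq_iff.mp hc).2
  rw [← shiftedCoeff_vecMul ht hc.le, ← piv_eq_coe_iff hcP] at hlast
  refine ⟨i, hlast.trans (hpiv i).symm, ?_⟩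
  have hdeg := WithBot.coe_injective (hcP.symm.trans (rdegRow_eq_of_piv_eq_coe hlast))
  have hnonneg := nonneg_of_coeffZ_ne_zero hi
  lia

end Pivot

section DegreeLTRows

variable (K : Type*) [Field K] {ι : Type*}

/-- The `K`-space of polynomial rows whose entry in column `j` has degree less than `n j`: the
space of remainders in the division by a square weak Popov matrix with pivot degrees `n`. -/
noncomputable def degreeLTRows (n : ι → ℕ) : Submodule K (ι → K[X]) :=
  Submodule.pi Set.univ fun j => degreeLT K (n j)

variable {K} in
theorem mem_degreeLTRows {n : ι → ℕ} {v : ι → K[X]} :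
    v ∈ degreeLTRows K n ↔ ∀ j, (v j).degree < n j := by
  simp [degreeLTRows, Submodule.mem_pi, mem_degreeLT]

/-- The identification of `degreeLTRows K n` with `∏ j, K ^ n j` by coefficients. -/
noncomputable def degreeLTRowsEquiv (n : ι → ℕ) :
    degreeLTRows K n ≃ₗ[K] ∀ j, Fin (n j) → K :=
  LinearEquiv.trans
    { toFun := fun v j => ⟨v.1 j, v.2 j (Set.mem_univ j)⟩
      invFun := fun w => ⟨fun j => w j, fun j _ => (w j).2⟩
      map_add' := fun _ _ => rfl
      map_smul' := fun _ _ => rfl }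
    (LinearEquiv.piCongrRight fun j => degreeLTEquiv K (n j))

theorem finite_degreeLTRows [Finite ι] (n : ι → ℕ) : Module.Finite K (degreeLTRows K n) :=
  .equiv (degreeLTRowsEquiv K n).symm

theorem finrank_degreeLTRows [Fintype ι] (n : ι → ℕ) :
    Module.finrank K (degreeLTRows K n) = ∑ j, n j := by
  rw [(degreeLTRowsEquiv K n).finrank_eq, Module.finrank_pi_fintype]
  simp only [Module.finrank_fin_fun]

end DegreeLTRows

section Square

variable {K : Type*} [Field K] {ι : Type*} [Fintype ι] [LinearOrder ι] {s : ι → ℤ}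
  {P : Matrix ι ι K[X]}

theorem IsWeakPopov.isUWeakPopov (hP : IsWeakPopov s P) : IsUWeakPopov s P :=
  ⟨hP.1, hP.2.injective⟩

theorem IsWeakPopov.piv_eq (hP : IsWeakPopov s P) (i : ι) : piv s (P i) = (i : WithBot ι) := by
  choose f hf using fun i => WithBot.ne_bot_iff_exists.mp (hP.1 i)
  have hmono : StrictMono f := fun i j hij => by
    simpa only [← hf, WithBot.coe_lt_coe] using hP.2 hij
  rw [← hf, hmono.eq_id, id]

theorem isWeakPopov_of_piv_eq (h : ∀ i, piv s (P i) = (i : WithBot ι)) : IsWeakPopov s P :=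
  ⟨fun i => h i ▸ WithBot.coe_ne_bot, fun i j hij => by simpa only [h, WithBot.coe_lt_coe]⟩

theorem IsWeakPopov.rdegRow_eq (hP : IsWeakPopov s P) (i : ι) :
    rdegRow s (P i) = ((pivDeg s (P i) + s i : ℤ) : WithBot ℤ) :=
  rdegRow_eq_of_piv_eq_coe (hP.piv_eq i)

theorem IsWeakPopov.rdegRow_vecMul (hP : IsWeakPopov s P) (q : ι → K[X]) :
    rdegRow s (q ᵥ* P) = rdegRow (fun i => pivDeg s (P i) + s i) q :=
  hP.isUWeakPopov.isReducedForm.rdegRow_vecMul hP.rdegRow_eq q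

theorem IsWeakPopov.exists_piv_vecMul (hP : IsWeakPopov s P) {q : ι → K[X]} (hq : q ≠ 0) :
    ∃ i : ι, piv s (q ᵥ* P) = (i : WithBot ι) ∧
      (pivDeg s (P i) : WithBot ℕ) ≤ ((q ᵥ* P) i).degree := by
  obtain ⟨i, hpiv, hdeg⟩ := hP.isUWeakPopov.exists_piv_vecMul hq
  rw [hP.piv_eq] at hpiv
  exact ⟨i, hpiv, by rw [degree_eq_pivDeg hpiv]; exact_mod_cast hdeg⟩

theorem IsWeakPopov.eq_zero_of_degree_lt (hP : IsWeakPopov s P) {q : ι → K[X]}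
    (hq : ∀ j, ((q ᵥ* P) j).degree < pivDeg s (P j)) : q = 0 := by
  by_contra hne
  obtain ⟨i, -, hdeg⟩ := hP.exists_piv_vecMul hne
  exact hdeg.not_gt (hq i)

/-- Both sides have the same dimension and the sum is direct, because a nonzero multiple of `P`
is never a remainder. -/
theorem IsWeakPopov.map_vecMulLinear_sup_degreeLTRows (hP : IsWeakPopov s P) {n : ι → ℕ} {c : ℤ}
    (hn : ∀ j, (n j : ℤ) + (pivDeg s (P j) + s j) = c) :
    (degreeLTRows K n).map (P.vecMulLinear.restrictScalars K) ⊔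
      degreeLTRows K (fun j => pivDeg s (P j)) =
      degreeLTRows K fun j => n j + pivDeg s (P j) := by
  have := finite_degreeLTRows K n
  have := finite_degreeLTRows K fun j => pivDeg s (P j)
  have := finite_degreeLTRows K fun j => n j + pivDeg s (P j)
  have hinj : Function.Injective (P.vecMulLinear.restrictScalars K) :=
    (injective_iff_map_eq_zero _).mpr fun _ hq =>
      hP.isUWeakPopov.isReducedForm.eq_zero_of_vecMul_eq_zero hq
  have hdisj : Disjoint ((degreeLTRows K n).map (P.vecMulLinear.restrictScalars K))
      (degreeLTRows K fun j => pivDeg s (P j)) := by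
    rw [Submodule.disjoint_def]
    rintro _ ⟨q, -, rfl⟩ hq
    rw [hP.eq_zero_of_degree_lt (mem_degreeLTRows.mp hq), map_zero]
  refine Submodule.eq_of_le_of_finrank_eq (sup_le ?_ fun v hv => ?_) ?_
  · rintro _ ⟨q, hq, rfl⟩
    rw [mem_degreeLTRows, ← rdegRow_lt_iff_degree (s := s) (c := c) fun j => by
      rw [← hn j, Nat.cast_add, add_assoc]]
    exact (hP.rdegRow_vecMul q).trans_lt
      ((rdegRow_lt_iff_degree hn).mpr (mem_degreeLTRows.mp hq))
  · rw [mem_degreeLTRows] at hv ⊢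
    exact fun j => (hv j).trans_le (Nat.cast_le.mpr (Nat.le_add_left _ _))
  · rw [← add_zero (Module.finrank K _), ← finrank_bot K (ι → K[X]), ← hdisj.eq_bot,
      Submodule.finrank_sup_add_finrank_inf_eq,
      ← (Submodule.equivMapOfInjective _ hinj _).finrank_eq]
    simp only [finrank_degreeLTRows, Finset.sum_add_distrib]

theorem IsWeakPopov.exists_degree_sub_vecMul_lt (hP : IsWeakPopov s P) (v : ι → K[X]) :
    ∃ q : ι → K[X], ∀ j, ((v - q ᵥ* P) j).degree < pivDeg s (P j) := by
  obtain ⟨c, hvc, hc⟩ :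
      ∃ c : ℤ, rdegRow s v < (c : WithBot ℤ) ∧ ∀ j, pivDeg s (P j) + s j ≤ c :=
    ((eventually_rdegRow_lt s v).and
      (Filter.eventually_all.mpr fun j => Filter.eventually_ge_atTop _)).exists
  choose n hn using fun j => Int.eq_ofNat_of_zero_le (sub_nonneg.mpr (hc j))
  have hn' : ∀ j, (n j : ℤ) + (pivDeg s (P j) + s j) = c := fun j => by have := hn j; lia
  have hv : v ∈ degreeLTRows K fun j => n j + pivDeg s (P j) :=
    mem_degreeLTRows.mpr ((rdegRow_lt_iff_degree fun j => by
      rw [← hn' j, Nat.cast_add, add_assoc]).mp hvc)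
  rw [← hP.map_vecMulLinear_sup_degreeLTRows hn'] at hv
  obtain ⟨_, ⟨q, -, rfl⟩, r, hr, rfl⟩ := Submodule.mem_sup.mp hv
  exact ⟨q, mem_degreeLTRows.mp (by simpa using hr)⟩

end Square

section ColumnNormalized

variable {K : Type*} [Field K] {ι : Type*} [DecidableEq ι]

/-- `R` has column degrees `δ` and identity column-leading matrix. The Popov form of a weak Popov
matrix with pivot degrees `δ` is characterized by this property. -/
def IsColumnNormalized (δ : ι → ℕ) (R : Matrix ι ι K[X]) : Prop :=
  ∀ i j, ((R - Matrix.diagonal fun k => (X : K[X]) ^ δ k) i j).degree < δ j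

namespace IsColumnNormalized

variable {δ : ι → ℕ} {R : Matrix ι ι K[X]}

theorem monic_diag (hR : IsColumnNormalized δ R) (i : ι) : (R i i).Monic := by
  have h := hR i i
  rw [Matrix.sub_apply, Matrix.diagonal_apply_eq] at h
  simpa using monic_X_pow_add h

theorem degree_diag (hR : IsColumnNormalized δ R) (i : ι) : (R i i).degree = δ i := by
  have h := hR i i
  rw [Matrix.sub_apply, Matrix.diagonal_apply_eq, ← degree_X_pow (R := K)] at h
  rw [← sub_add_cancel (R i i) (X ^ δ i), degree_add_eq_right_of_degree_lt h, degree_X_pow]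

theorem degree_lt (hR : IsColumnNormalized δ R) {i j : ι} (hij : i ≠ j) :
    (R i j).degree < δ j := by
  simpa only [Matrix.sub_apply, Matrix.diagonal_apply_ne _ hij, sub_zero] using hR i j

theorem degree_le (hR : IsColumnNormalized δ R) (i j : ι) : (R i j).degree ≤ δ j := by
  rcases eq_or_ne i j with rfl | hij
  · exact (hR.degree_diag i).le
  · exact (hR.degree_lt hij).le

variable [Fintype ι]

theorem rdegRow_le (hR : IsColumnNormalized δ R) (i : ι) :
    rdegRow (fun j => -(δ j : ℤ)) (R i) ≤ ((0 : ℤ) : WithBot ℤ) :=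
  rdegRow_le_iff_degZ.mpr fun j => by
    rw [zero_sub, neg_neg, degZ_le_natCast_iff]
    exact hR.degree_le i j

theorem degree_sub_vecMul_lt (hR : IsColumnNormalized δ R) {v : ι → K[X]}
    (hv : rdegRow (fun j => -(δ j : ℤ)) v ≤ ((0 : ℤ) : WithBot ℤ)) (j : ι) :
    ((v - (C ∘ shiftedCoeff (fun j => -(δ j : ℤ)) 0 v) ᵥ* R) j).degree < δ j := by
  set a := shiftedCoeff (fun j => -(δ j : ℤ)) 0 v
  have hlead : (v j - C (a j) * X ^ δ j : K[X]).degree < δ j := by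
    have hvj := rdegRow_le_iff_degZ.mp hv j
    simp only [a, shiftedCoeff]
    rw [zero_sub, neg_neg] at hvj ⊢
    rw [coeffZ_natCast]
    exact degree_sub_C_mul_X_pow_lt (degZ_le_natCast_iff.mp hvj)
  have hrem : ((C ∘ a) ᵥ* (R - Matrix.diagonal fun k => X ^ δ k)) j ∈ degreeLT K (δ j) := by
    rw [Matrix.vecMul, dotProduct]
    refine sum_mem fun i _ => ?_
    rw [Function.comp_apply, ← smul_eq_C_mul]
    exact Submodule.smul_mem _ _ (mem_degreeLT.mpr (hR i j))
  have hsplit : (v - (C ∘ a) ᵥ* R) j = (v j - C (a j) * X ^ δ j) -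
      ((C ∘ a) ᵥ* (R - Matrix.diagonal fun k => X ^ δ k)) j := by
    rw [Matrix.vecMul_sub, Pi.sub_apply, Pi.sub_apply, Matrix.vecMul_diagonal]
    simp
  rw [hsplit]
  exact (degree_sub_le _ _).trans_lt (max_lt hlead (mem_degreeLT.mp hrem))

end IsColumnNormalized

end ColumnNormalized

theorem det_map_C {R : Type*} [CommRing R] {ι : Type*} [Fintype ι] [DecidableEq ι]
    (L : Matrix ι ι R) : (L.map C).det = C L.det :=
  (RingHom.map_det C L).symm

section Popov

variable {K : Type*} [Field K] {ι : Type*} [Fintype ι] [LinearOrder ι] {s : ι → ℤ}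
  {P U : Matrix ι ι K[X]}

theorem IsWeakPopov.exists_isColumnNormalized_mul (hP : IsWeakPopov s P) :
    ∃ U : Matrix ι ι K[X], IsColumnNormalized (fun j => pivDeg s (P j)) (U * P) := by
  choose U hU using fun i => hP.exists_degree_sub_vecMul_lt
    (Matrix.diagonal (fun k => X ^ pivDeg s (P k)) i)
  refine ⟨.of U, fun i j => ?_⟩
  rw [← neg_sub, Matrix.neg_apply, degree_neg]
  exact hU i j

theorem IsWeakPopov.piv_eq_of_isColumnNormalized (hP : IsWeakPopov s P)
    (hU : IsColumnNormalized (fun j => pivDeg s (P j)) (U * P)) (i : ι) :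
    piv s ((U * P) i) = (i : WithBot ι) := by
  have hne : U i ≠ 0 := fun h0 => (hU.monic_diag i).ne_zero <| by
    rw [Matrix.mul_apply_eq_vecMul, h0, Matrix.zero_vecMul, Pi.zero_apply]
  obtain ⟨k, hpiv, hdeg⟩ := hP.exists_piv_vecMul hne
  rw [← Matrix.mul_apply_eq_vecMul] at hpiv hdeg
  have hik : i = k := by
    by_contra hne
    exact hdeg.not_gt (hU.degree_lt hne)
  rw [hpiv, hik]

theorem IsWeakPopov.isPopov_of_isColumnNormalized (hP : IsWeakPopov s P)
    (hU : IsColumnNormalized (fun j => pivDeg s (P j)) (U * P)) : IsPopov s (U * P) := by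
  have hpiv := hP.piv_eq_of_isColumnNormalized hU
  refine ⟨isWeakPopov_of_piv_eq hpiv, fun i j hij => ?_⟩
  obtain rfl : i = j := WithBot.coe_injective ((hpiv i).symm.trans hij)
  refine ⟨hU.monic_diag i, fun i' hi' => ?_⟩
  rw [hU.degree_diag]
  exact hU.degree_lt hi'

theorem IsWeakPopov.rdegRow_of_isColumnNormalized (hP : IsWeakPopov s P)
    (hU : IsColumnNormalized (fun j => pivDeg s (P j)) (U * P)) (i : ι) :
    rdegRow (fun j => pivDeg s (P j) + s j) (U i) = ((pivDeg s (P i) + s i : ℤ) : WithBot ℤ) := by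
  have hpiv := hP.piv_eq_of_isColumnNormalized hU i
  have hdeg : pivDeg s ((U * P) i) = pivDeg s (P i) := by
    exact_mod_cast (degree_eq_pivDeg hpiv).symm.trans (hU.degree_diag i)
  rw [← hP.rdegRow_vecMul, ← Matrix.mul_apply_eq_vecMul, rdegRow_eq_of_piv_eq_coe hpiv, hdeg]

theorem IsWeakPopov.det_ne_zero_of_isColumnNormalized (hP : IsWeakPopov s P)
    (hU : IsColumnNormalized (fun j => pivDeg s (P j)) (U * P)) : U.det ≠ 0 := by
  intro hdet
  obtain ⟨w, hw, hwU⟩ := Matrix.exists_vecMul_eq_zero_iff.mpr hdet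
  have hred := (hP.isPopov_of_isColumnNormalized hU).1.isUWeakPopov.isReducedForm
  exact hw <| hred.eq_zero_of_vecMul_eq_zero <| by
    rw [← Matrix.vecMul_vecMul, hwU, Matrix.zero_vecMul]

theorem IsWeakPopov.eq_shiftedCoeff_vecMul (hP : IsWeakPopov s P)
    (hU : IsColumnNormalized (fun j => pivDeg s (P j)) (U * P)) {w : ι → K[X]}
    (hw : rdegRow (fun j => -(pivDeg s (P j) : ℤ)) (w ᵥ* P) ≤ ((0 : ℤ) : WithBot ℤ)) :
    w = (C ∘ shiftedCoeff (fun j => -(pivDeg s (P j) : ℤ)) 0 (w ᵥ* P)) ᵥ* U := by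
  refine sub_eq_zero.mp (hP.eq_zero_of_degree_lt fun j => ?_)
  rw [Matrix.sub_vecMul, Matrix.vecMul_vecMul]
  exact hU.degree_sub_vecMul_lt hw j

theorem IsWeakPopov.isUnit_det_lm_and_eq_mul (hP : IsWeakPopov s P)
    (hU : IsColumnNormalized (fun j => pivDeg s (P j)) (U * P)) {W : Matrix ι ι K[X]}
    (hW : IsUnit W.det)
    (hdeg : ∀ i, rdegRow (fun j => -(pivDeg s (P j) : ℤ)) ((W * P) i) ≤ ((0 : ℤ) : WithBot ℤ)) :
    IsUnit (lm (fun j => -(pivDeg s (P j) : ℤ)) (W * P)).det ∧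
      W = (lm (fun j => -(pivDeg s (P j) : ℤ)) (W * P)).map C * U := by
  set δ : ι → ℤ := fun j => -(pivDeg s (P j) : ℤ)
  let L : Matrix ι ι K := .of fun i => shiftedCoeff δ 0 ((W * P) i)
  have hWU : W = L.map C * U := Matrix.ext_row fun i => hP.eq_shiftedCoeff_vecMul hU (hdeg i)
  have hL : L.det ≠ 0 := fun h0 => hW.ne_zero <| by
    rw [hWU, Matrix.det_mul, det_map_C, h0, map_zero, zero_mul]
  have hlm : lm δ (W * P) = L := Matrix.ext_row fun i => lm_row_eq <| rdegRow_eq_iff.mpr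
    ⟨hdeg i, fun h0 => hL (Matrix.det_eq_zero_of_row_eq_zero i (congrFun h0))⟩
  rw [hlm]
  exact ⟨hL.isUnit, hWU⟩

theorem IsWeakPopov.isPopov_lm_inv_mul (hP : IsWeakPopov s P) {W : Matrix ι ι K[X]}
    (hW : IsUnit W.det)
    (hdeg : ∀ i, rdegRow (fun j => -(pivDeg s (P j) : ℤ)) ((W * P) i) ≤ ((0 : ℤ) : WithBot ℤ)) :
    IsUnit (lm (fun j => -(pivDeg s (P j) : ℤ)) (W * P)).det ∧
      IsPopov s ((lm (fun j => -(pivDeg s (P j) : ℤ)) (W * P))⁻¹.map C * (W * P)) := by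
  obtain ⟨U, hU⟩ := hP.exists_isColumnNormalized_mul
  obtain ⟨hunit, hWU⟩ := hP.isUnit_det_lm_and_eq_mul hU hW hdeg
  refine ⟨hunit, ?_⟩
  set L := lm (fun j => -(pivDeg s (P j) : ℤ)) (W * P)
  have hcancel : L⁻¹.map C * W = U := by
    rw [hWU, ← Matrix.mul_assoc, ← Matrix.map_mul, Matrix.nonsing_inv_mul _ hunit]
    simp
  rw [← Matrix.mul_assoc, hcancel]
  exact hP.isPopov_of_isColumnNormalized hU

end Popov

section RowSpace

variable {K : Type*} [Field K] {ι ν : Type*}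

theorem IsReducedForm.isBasisOf_rowSpace [Finite ι] [Fintype ν] {s : ν → ℤ} {B : Matrix ι ν K[X]}
    (hB : IsReducedForm s B) : IsBasisOf B (rowSpace B) :=
  have := Fintype.ofFinite ι
  ⟨Fintype.linearIndependent_iff.mpr fun _ hw => congrFun <|
    hB.eq_zero_of_vecMul_eq_zero ((Matrix.vecMul_eq_sum _ _).trans hw), rfl⟩

variable [Fintype ι]

theorem mem_rowSpace {P : Matrix ι ν K[X]} {v : ν → K[X]} :
    v ∈ rowSpace P ↔ ∃ w, w ᵥ* P = v := by
  simp only [rowSpace, Submodule.mem_span_range_iff_exists_fun, Matrix.vecMul_eq_sum]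

theorem rowSpace_mul [DecidableEq ι] {U : Matrix ι ι K[X]} (hU : IsUnit U.det)
    (P : Matrix ι ν K[X]) : rowSpace (U * P) = rowSpace P := by
  ext v
  simp only [mem_rowSpace, ← Matrix.vecMul_vecMul]
  constructor
  · rintro ⟨w, rfl⟩
    exact ⟨w ᵥ* U, rfl⟩
  · rintro ⟨w, rfl⟩
    exact ⟨w ᵥ* U⁻¹, by rw [Matrix.vecMul_vecMul w, Matrix.nonsing_inv_mul _ hU, Matrix.vecMul_one]⟩

theorem IsReducedForm.isBasisOf_rowSpace_of_mul [DecidableEq ι] [Fintype ν] {s : ν → ℤ}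
    {U : Matrix ι ι K[X]} {P : Matrix ι ν K[X]} (hUP : IsReducedForm s (U * P))
    (hU : IsUnit U.det) : IsBasisOf (U * P) (rowSpace P) :=
  rowSpace_mul hU P ▸ hUP.isBasisOf_rowSpace

end RowSpace

section Kernel

variable {K : Type*} [Field K] {m n : ℕ}

theorem rdegRow_append_le_iff {s : Fin (m + n) → ℤ} {u : Fin m → K[X]} {v : Fin n → K[X]} {c : ℤ} :
    rdegRow s (Fin.append u v) ≤ (c : WithBot ℤ) ↔
      rdegRow (s ∘ Fin.castAdd n) u ≤ (c : WithBot ℤ) ∧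
        rdegRow (s ∘ Fin.natAdd m) v ≤ (c : WithBot ℤ) := by
  simp only [rdegRow_le_iff_degZ, Fin.forall_fin_add, Fin.append_left, Fin.append_right,
    Function.comp_apply]

theorem vecMul_of_append {ι : Type*} [Fintype ι] (w : ι → K[X]) (U : Matrix ι (Fin m) K[X])
    (R : Matrix ι (Fin n) K[X]) :
    w ᵥ* Matrix.of (fun i => Fin.append (U i) (R i)) = Fin.append (w ᵥ* U) (w ᵥ* R) := by
  ext1 j
  refine Fin.addCases (fun k => ?_) (fun k => ?_) j
  all_goals simp [Matrix.vecMul, dotProduct]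

theorem append_mem_leftKernel_iff {P : Matrix (Fin m) (Fin n) K[X]} {q : Fin m → K[X]}
    {r : Fin n → K[X]} :
    Fin.append q r ∈ leftKernel ((Matrix.fromRows P (-1)).submatrix finSumFinEquiv.symm id) ↔
      r = q ᵥ* P := by
  have hsum : Fin.append q r ∘ finSumFinEquiv = Sum.elim q r := by
    ext (i | j) <;> simp
  rw [leftKernel, LinearMap.mem_ker, Matrix.vecMulLinear_apply, Matrix.submatrix_vecMul_equiv,
    Equiv.symm_symm, hsum, Matrix.sumElim_vecMul_fromRows, Matrix.vecMul_neg, Matrix.vecMul_one,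
    Function.comp_id, ← sub_eq_add_neg, sub_eq_zero, eq_comm]

/-- A kernel basis `[U R]` is a unimodular transform of the obvious basis `[I P]`. -/
theorem eq_mul_and_isUnit_det_of_rowSpace_eq_leftKernel {P R : Matrix (Fin m) (Fin n) K[X]}
    {U : Matrix (Fin m) (Fin m) K[X]}
    (h : rowSpace (Matrix.of fun i => Fin.append (U i) (R i)) =
      leftKernel ((Matrix.fromRows P (-1)).submatrix finSumFinEquiv.symm id)) :
    R = U * P ∧ IsUnit U.det := by
  constructor
  · refine funext fun i => ?_
    rw [Matrix.mul_apply_eq_vecMul, ← append_mem_leftKernel_iff, ← h]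
    exact Submodule.subset_span ⟨i, rfl⟩
  · have hmem : ∀ q : Fin m → K[X], ∃ w, w ᵥ* U = q := fun q => by
      obtain ⟨w, hw⟩ := mem_rowSpace.mp (h ▸ append_mem_leftKernel_iff.mpr (rfl : q ᵥ* P = _))
      rw [vecMul_of_append] at hw
      exact ⟨w, funext fun j => by simpa using congrFun hw (Fin.castAdd n j)⟩
    choose W hW using fun i => hmem ((1 : Matrix (Fin m) (Fin m) K[X]) i)
    exact Matrix.isUnit_det_of_left_inverse (B := .of W) (Matrix.ext_row hW)

/-- The Popov form `U * P` gives a kernel element `[U U * P]` of nonpositive row degrees, hence by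
predictable degrees every reduced kernel basis has nonpositive row degrees. -/
theorem IsWeakPopov.rdegRow_mul_le_of_isReducedForm {P W : Matrix (Fin m) (Fin m) K[X]}
    {s : Fin m → ℤ} (hP : IsWeakPopov s P) (hs : ∀ i, pivDeg s (P i) + s i ≤ 0)
    (hW : IsUnit W.det) {d : Fin (m + m) → ℤ}
    (hd₁ : d ∘ Fin.castAdd m = fun i => pivDeg s (P i) + s i)
    (hd₂ : d ∘ Fin.natAdd m = fun i => -(pivDeg s (P i) : ℤ))
    (hred : IsReducedForm d (Matrix.of fun i => Fin.append (W i) ((W * P) i))) (i : Fin m) :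
    rdegRow (fun j => -(pivDeg s (P j) : ℤ)) ((W * P) i) ≤ ((0 : ℤ) : WithBot ℤ) := by
  obtain ⟨U, hU⟩ := hP.exists_isColumnNormalized_mul
  have hdet : (U * W⁻¹).det ≠ 0 := by
    rw [Matrix.det_mul]
    exact mul_ne_zero (hP.det_ne_zero_of_isColumnNormalized hU)
      (Matrix.isUnit_nonsing_inv_det W hW).ne_zero
  have hrows : ∀ k, rdegRow d ((U * W⁻¹ * Matrix.of fun i => Fin.append (W i) ((W * P) i)) k) ≤
      ((0 : ℤ) : WithBot ℤ) := fun k => by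
    rw [Matrix.mul_apply_eq_vecMul, vecMul_of_append, rdegRow_append_le_iff, hd₁, hd₂,
      ← Matrix.mul_apply_eq_vecMul, ← Matrix.mul_apply_eq_vecMul, ← Matrix.mul_assoc,
      Matrix.nonsing_inv_mul_cancel_right _ _ hW, hP.rdegRow_of_isColumnNormalized hU]
    exact ⟨WithBot.coe_le_coe.mpr (hs k), hU.rdegRow_le k⟩
  have hright := (rdegRow_append_le_iff.mp (hred.rdegRow_le_of_mul hdet hrows i)).2
  rwa [hd₂] at hright

end Kernel

/-- Corollary 5.2: with the setup of Lemma 5.1, if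
`[Ũ R̃]` is a `(−d)`-reduced basis of the left kernel of `F = [P; −I]`, then
`R̃` is a `(−δ)`-reduced form of `P`, `lm_{−δ}(R̃)` is invertible, and
`lm_{−δ}(R̃)⁻¹ · R̃` is the `(−s)`-Popov form of `P`. -/
theorem normalize_popov {K : Type*} [Field K] {m : ℕ}
    (s : Fin m → ℤ) (P : Matrix (Fin m) (Fin m) K[X])
    (hP : IsWeakPopov (fun i => -s i) P)
    (δ : Fin m → ℕ) (hδ : ∀ i, pivDeg (fun j => -s j) (P i) = δ i)
    (hsδ : ∀ i, (δ i : ℤ) ≤ s i)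
    (Ut Rt : Matrix (Fin m) (Fin m) K[X]) :
    let d : Fin (m + m) → ℤ := Fin.append (fun i => s i - δ i) (fun i => (δ i : ℤ))
    let F : Matrix (Fin (m + m)) (Fin m) K[X] :=
      (Matrix.fromRows P (-1)).submatrix (⇑(finSumFinEquiv (m := m) (n := m)).symm) id
    let URt : Matrix (Fin m) (Fin (m + m)) K[X] := Matrix.of fun i => Fin.append (Ut i) (Rt i)
    IsBasisOf URt (leftKernel F) →
    IsReducedForm (fun c => -d c) URt →
    (IsBasisOf Rt (rowSpace P) ∧ IsReducedForm (fun i => -(δ i : ℤ)) Rt) ∧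
    IsUnit (lm (fun i => -(δ i : ℤ)) Rt).det ∧
    (IsBasisOf (((lm (fun i => -(δ i : ℤ)) Rt)⁻¹).map Polynomial.C * Rt) (rowSpace P) ∧
      IsPopov (fun i => -s i) (((lm (fun i => -(δ i : ℤ)) Rt)⁻¹).map Polynomial.C * Rt)) := by
  intro d F URt hbasis hred
  obtain rfl : δ = fun i => pivDeg (fun j => -s j) (P i) := funext fun i => (hδ i).symm
  obtain ⟨rfl, hUt⟩ := eq_mul_and_isUnit_det_of_rowSpace_eq_leftKernel hbasis.2
  have hleft : (fun c => -d c) ∘ Fin.castAdd m =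
      fun i => pivDeg (fun j => -s j) (P i) + -s i := by
    ext i
    simp [d, sub_eq_add_neg]
  have hright : (fun c => -d c) ∘ Fin.natAdd m =
      fun i => -(pivDeg (fun j => -s j) (P i) : ℤ) := by
    ext i
    simp only [d, Function.comp_apply, Fin.append_right]
  have hdeg := hP.rdegRow_mul_le_of_isReducedForm (fun i => by linarith [hsδ i]) hUt
    hleft hright hred
  obtain ⟨hlm, hpopov⟩ := hP.isPopov_lm_inv_mul hUt hdeg
  have hRt : IsReducedForm _ (Ut * P) := Matrix.linearIndependent_rows_of_det_ne_zero hlm.ne_zero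
  have hinv := (Matrix.isUnit_nonsing_inv_det _ hlm).map (C : K →+* K[X])
  rw [← det_map_C] at hinv
  refine ⟨⟨hRt.isBasisOf_rowSpace_of_mul hUt, hRt⟩, hlm, ?_, hpopov⟩
  rw [← rowSpace_mul hUt P]
  exact hpopov.1.isUWeakPopov.isReducedForm.isBasisOf_rowSpace_of_mul hinv
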